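/- Under the push-subgradient algorithm, if the graph sequence {𝔾(t)} is uniformly strongly connected, the subgradients are uniformly bounded (‖g_i(t)‖₂ ≤ G for all i, t), and the stepsizes satisfy the step-size assumption, then for every agent k ∈ {1,…,n}: lim_{t→∞} f( (Σ_{τ=0}^t α(τ) z_k(τ)) / (Σ_{τ=0}^t α(τ)) ) = f(z*). -/

import Mathlib

open Filter Finset
open scoped InnerProductSpace

/-!
The ratios `z t i = x t i / y t i` evolve under row stochastic matrices with the same graphs as `W`,
and their nonzero entries stay bounded below because every push-sum weight does. Products of
`card ι * L` consecutive such matrices are entrywise at least a fixed `δ > 0`, so the diameter of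
the set of estimates contracts by `1 - δ` over such a block, up to a perturbation of order `α`.
As `∑ α ^ 2 < ∞`, the diameters are square-summable, and by Cauchy-Schwarz `∑ α * diam < ∞`.

Column stochasticity makes the mean of `x` follow a subgradient method whose subgradients are taken
at the estimates, within one diameter of the mean. A first energy estimate, using that
`∑ i, f i (z i)` is at least `∑ i, f i c` up to a multiple of the diameter when `c` is a minimizer,
shows that the iterates are bounded, so that the `f i` are Lipschitz where it matters. A second one,
comparing all estimates with that of agent `k`, bounds `∑ α * (F (z k) - F c)`, and Jensen's
inequality together with `∑ α = ∞` concludes.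
-/

section Spreading

variable {V : Type*}

/-- Uniform strong connectivity of a time-varying directed graph, `E t u v` being the presence of an
arc from `u` to `v` at time `t`: the union graph over any window of `L` consecutive times is
strongly connected. Reaching a vertex from itself also takes an arc. -/
def UniformlyStronglyConnected (E : ℕ → V → V → Prop) (L : ℕ) : Prop :=
  ∀ t i j, Relation.TransGen (fun u v => ∃ k ∈ Ico t (t + L), E k u v) i j

namespace UniformlyStronglyConnected

variable {E : ℕ → V → V → Prop} {L : ℕ} {S : ℕ → Finset V}

lemma shift (hE : UniformlyStronglyConnected E L) (s : ℕ) :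
    UniformlyStronglyConnected (fun t => E (s + t)) L := by
  refine fun t i j => Relation.TransGen.mono ?_ _ _ (hE (s + t) i j)
  rintro u v ⟨k, hk, huv⟩
  obtain ⟨m, rfl⟩ := Nat.exists_eq_add_of_le ((Nat.le_add_right s t).trans (mem_Ico.1 hk).1)
  exact ⟨m, by simpa [add_assoc] using hk, huv⟩

variable [Fintype V]

lemma ssubset_of_ne_univ (hE : UniformlyStronglyConnected E L) (hS : Monotone S)
    (hspread : ∀ t u v, u ∈ S t → E t u v → v ∈ S (t + 1)) {t : ℕ} (hne : (S t).Nonempty)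
    (huniv : S t ≠ univ) : S t ⊂ S (t + L) := by
  refine (hS (Nat.le_add_right t L)).lt_of_ne fun heq => huniv (eq_univ_iff_forall.2 fun j => ?_)
  have hclosed : ∀ u v, (∃ k ∈ Ico t (t + L), E k u v) → u ∈ S t → v ∈ S t := by
    rintro u v ⟨k, hk, huv⟩ hu
    obtain ⟨htk, hkL⟩ := mem_Ico.1 hk
    rw [heq]
    exact hS hkL (hspread k u v (hS htk hu) huv)
  obtain ⟨i, hi⟩ := hne
  induction hE t i j with
  | single hij => exact hclosed _ _ hij hi
  | tail _ huv hu => exact hclosed _ _ huv hu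

lemma min_le_card (hE : UniformlyStronglyConnected E L) (hS : Monotone S)
    (hspread : ∀ t u v, u ∈ S t → E t u v → v ∈ S (t + 1)) (hne : (S 0).Nonempty) (m : ℕ) :
    min (m + 1) (Fintype.card V) ≤ #(S (m * L)) := by
  induction m with
  | zero => simpa using Or.inl hne
  | succ m ih =>
    rw [Nat.succ_mul]
    by_cases huniv : S (m * L) = univ
    · have : S (m * L + L) = univ := univ_subset_iff.1 (huniv ▸ hS (Nat.le_add_right _ L))
      simp [this]
    · have := card_lt_card
        (hE.ssubset_of_ne_univ hS hspread (hne.mono (hS (Nat.zero_le _))) huniv)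
      omega

theorem eq_univ (hE : UniformlyStronglyConnected E L) (hself : ∀ t v, E t v v)
    (hspread : ∀ t u v, u ∈ S t → E t u v → v ∈ S (t + 1)) (hne : (S 0).Nonempty) :
    S (Fintype.card V * L) = univ := by
  have hS : Monotone S := monotone_nat_of_le_succ fun t v hv => hspread t v v hv (hself t v)
  have := hE.min_le_card hS hspread hne (Fintype.card V)
  exact (card_eq_iff_eq_univ _).1 (le_antisymm (card_le_univ _) (by omega))

end UniformlyStronglyConnected

end Spreading

section Transition

variable {ι : Type*} {A : ℕ → Matrix ι ι ℝ} {γ : ℝ} {L : ℕ}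

/-- Weight matrices that spread information uniformly in time: nonnegative entries that are at least
`γ` when nonzero, positive diagonals, and uniformly strongly connected graphs, an arc from `j` to
`i` at time `t` meaning `0 < A t i j`. -/
structure IsUniformlyMixing (A : ℕ → Matrix ι ι ℝ) (γ : ℝ) (L : ℕ) : Prop where
  pos : 0 < γ
  nonneg : ∀ t i j, 0 ≤ A t i j
  diag_pos : ∀ t i, 0 < A t i i
  le_of_pos : ∀ t i j, 0 < A t i j → γ ≤ A t i j
  connected : UniformlyStronglyConnected (fun t u v => 0 < A t v u) L

lemma IsUniformlyMixing.shift (hA : IsUniformlyMixing A γ L) (s : ℕ) :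
    IsUniformlyMixing (fun t => A (s + t)) γ L where
  pos := hA.pos
  nonneg t := hA.nonneg (s + t)
  diag_pos t := hA.diag_pos (s + t)
  le_of_pos t := hA.le_of_pos (s + t)
  connected := hA.connected.shift s

variable [Fintype ι] [DecidableEq ι]

/-- The backward product `A (m - 1) * ⋯ * A 1 * A 0`, which carries a state at time `0` to time `m`
along `x (t + 1) = A t x t`. -/
def transition (A : ℕ → Matrix ι ι ℝ) : ℕ → Matrix ι ι ℝ
  | 0 => 1
  | m + 1 => A m * transition A m

lemma transition_mem_rowStochastic (hA : ∀ t, A t ∈ Matrix.rowStochastic ℝ ι) (m : ℕ) :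
    transition A m ∈ Matrix.rowStochastic ℝ ι := by
  induction m with
  | zero => exact one_mem _
  | succ m ih => exact mul_mem (hA m) ih

lemma transition_nonneg (hA : ∀ t i j, 0 ≤ A t i j) (m : ℕ) (i j : ι) : 0 ≤ transition A m i j := by
  induction m generalizing i with
  | zero => exact Matrix.zero_le_one_elem i j
  | succ m ih => exact sum_nonneg fun k _ => mul_nonneg (hA m i k) (ih k)

lemma IsUniformlyMixing.pow_le_transition_succ (hA : IsUniformlyMixing A γ L) {m : ℕ} {i j k : ι}
    (hjk : γ ^ m ≤ transition A m k j) (hki : 0 < A m i k) :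
    γ ^ (m + 1) ≤ transition A (m + 1) i j := by
  have hnonneg := transition_nonneg hA.nonneg m
  calc γ ^ (m + 1) = γ * γ ^ m := pow_succ' γ m
    _ ≤ A m i k * transition A m k j := by
      have := hA.pos
      gcongr
      exact hA.le_of_pos m i k hki
    _ ≤ transition A (m + 1) i j :=
      single_le_sum (f := fun k => A m i k * transition A m k j)
        (fun k _ => mul_nonneg (hA.nonneg m i k) (hnonneg k j)) (mem_univ k)

theorem IsUniformlyMixing.pow_le_transition (hA : IsUniformlyMixing A γ L) (i j : ι) :
    γ ^ (Fintype.card ι * L) ≤ transition A (Fintype.card ι * L) i j := by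
  let S (m : ℕ) : Finset ι := {k | γ ^ m ≤ transition A m k j}
  have hS : S (Fintype.card ι * L) = univ :=
    hA.connected.eq_univ hA.diag_pos
      (fun m u v hu huv => by
        simp only [S, mem_filter_univ] at hu ⊢
        exact hA.pow_le_transition_succ hu huv)
      ⟨j, by simp [S, transition]⟩
  simpa [S] using hS.ge (mem_univ i)

end Transition

section SquareSummable

variable {a e : ℕ → ℝ}

lemma summable_of_le_mul_add {q : ℝ} (B : ℕ) (ha : ∀ t, 0 ≤ a t) (hq : q < 1)
    (he : Summable e) (hrec : ∀ t, a (t + B) ≤ q * a t + e t) : Summable a := by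
  obtain ⟨M, hM⟩ := he.hasSum.tendsto_sum_nat.bddAbove_range
  refine summable_of_sum_range_le (c := (∑ t ∈ range B, a t + M) / (1 - q)) ha fun N => ?_
  rw [le_div_iff₀ (sub_pos.2 hq)]
  have hsplit : ∑ t ∈ range N, a t ≤ ∑ t ∈ range B, a t + ∑ t ∈ range N, a (B + t) := by
    rw [← sum_range_add]
    exact sum_le_sum_of_subset_of_nonneg (range_mono (Nat.le_add_left N B)) fun t _ _ => ha t
  have hshift : ∑ t ∈ range N, a (B + t) ≤ q * ∑ t ∈ range N, a t + ∑ t ∈ range N, e t := by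
    rw [mul_sum, ← sum_add_distrib]
    exact sum_le_sum fun t _ => by simpa only [add_comm B t] using hrec t
  have hM' : ∑ t ∈ range N, e t ≤ M := hM (Set.mem_range_self N)
  linarith

-- Convexity of the square gives `(q a + e) ^ 2 ≤ q a ^ 2 + e ^ 2 / (1 - q)`.
lemma summable_sq_of_le_mul_add {q : ℝ} (B : ℕ) (ha : ∀ t, 0 ≤ a t) (hq₀ : 0 ≤ q) (hq : q < 1)
    (he : Summable fun t => e t ^ 2) (hrec : ∀ t, a (t + B) ≤ q * a t + e t) :
    Summable fun t => a t ^ 2 := by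
  refine summable_of_le_mul_add B (fun t => sq_nonneg (a t)) hq
    (he.mul_left (1 - q)⁻¹) fun t => ?_
  have hq' : 0 < 1 - q := sub_pos.2 hq
  calc a (t + B) ^ 2 ≤ (q * a t + e t) ^ 2 := pow_le_pow_left₀ (ha _) (hrec t) 2
    _ = q * a t ^ 2 + (1 - q)⁻¹ * e t ^ 2 - q * (1 - q) * (a t - (1 - q)⁻¹ * e t) ^ 2 := by
      field_simp
      ring
    _ ≤ q * a t ^ 2 + (1 - q)⁻¹ * e t ^ 2 := sub_le_self _ (by positivity)

lemma summable_sq_sum_range_add (he : Summable fun t => e t ^ 2) (B : ℕ) :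
    Summable fun t => (∑ k ∈ range B, e (t + k)) ^ 2 := by
  have hshift : Summable fun t => ∑ k ∈ range B, e (t + k) ^ 2 :=
    summable_sum fun k _ => (summable_nat_add_iff k).2 he
  exact .of_nonneg_of_le (fun _ => sq_nonneg _) (fun _ => sq_sum_le_card_mul_sum_sq)
    (hshift.mul_left _)

end SquareSummable

section Consensus

lemma norm_sub_le_diam_range {ι E : Type*} [Finite ι] [SeminormedAddCommGroup E] (v : ι → E)
    (i j : ι) : ‖v i - v j‖ ≤ Metric.diam (Set.range v) := by
  rw [← dist_eq_norm]
  exact Metric.dist_le_diam_of_mem (Set.finite_range v).isBounded (Set.mem_range_self i)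
    (Set.mem_range_self j)

variable {ι E : Type*} [Fintype ι] [SeminormedAddCommGroup E] [NormedSpace ℝ E]

lemma norm_sum_smul_sub_sum_smul_le [DecidableEq ι] {P : Matrix ι ι ℝ}
    (hP : P ∈ Matrix.rowStochastic ℝ ι) {δ : ℝ} (hδ : ∀ i j, δ ≤ P i j) {v : ι → E} {D : ℝ}
    (hv : ∀ j k, ‖v j - v k‖ ≤ D) (i i' : ι) :
    ‖∑ j, P i j • v j - ∑ j, P i' j • v j‖ ≤ (1 - δ) * D := by
  have hD : 0 ≤ D := (norm_nonneg _).trans (hv i i)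
  have hrow := Matrix.sum_row_of_mem_rowStochastic hP
  have hnonneg (i j : ι) : 0 ≤ P i j := Matrix.nonneg_of_mem_rowStochastic hP
  have hpair : ∑ j, P i j • v j - ∑ j, P i' j • v j =
      ∑ j, ∑ k, (P i j * P i' k) • (v j - v k) := by
    simp only [smul_sub, sum_sub_distrib, ← sum_smul, ← mul_sum, hrow, mul_one]
    rw [sum_comm]
    simp only [← sum_smul, ← sum_mul, hrow, one_mul]
  have hdiag : δ ≤ ∑ j, P i j * P i' j :=
    calc δ = ∑ j, P i j * δ := by rw [← sum_mul, hrow, one_mul]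
      _ ≤ ∑ j, P i j * P i' j := sum_le_sum fun j _ => mul_le_mul_of_nonneg_left (hδ i' j)
        (hnonneg i j)
  have hterm (j k : ι) : ‖(P i j * P i' k) • (v j - v k)‖ ≤
      P i j * P i' k * D - if j = k then P i j * P i' k * D else 0 := by
    have hjk := mul_nonneg (hnonneg i j) (hnonneg i' k)
    rw [norm_smul, Real.norm_of_nonneg hjk]
    split_ifs with h
    · simp [h]
    · simpa using mul_le_mul_of_nonneg_left (hv j k) hjk
  calc ‖∑ j, P i j • v j - ∑ j, P i' j • v j‖
      ≤ ∑ j, ∑ k, ‖(P i j * P i' k) • (v j - v k)‖ := by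
        rw [hpair]
        exact (norm_sum_le _ _).trans (sum_le_sum fun j _ => norm_sum_le _ _)
    _ ≤ ∑ j, ∑ k, (P i j * P i' k * D - if j = k then P i j * P i' k * D else 0) :=
        sum_le_sum fun j _ => sum_le_sum fun k _ => hterm j k
    _ = (1 - ∑ j, P i j * P i' j) * D := by
        simp only [sum_sub_distrib, sum_ite_eq, mem_univ, if_true, ← sum_mul, ← mul_sum, hrow,
          mul_one, sub_mul]
    _ ≤ (1 - δ) * D := mul_le_mul_of_nonneg_right (sub_le_sub_left hdiag 1) hD

variable {A : ℕ → Matrix ι ι ℝ} {z e : ℕ → ι → E} {ε : ℕ → ℝ}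

lemma norm_sub_transition_smul_le [DecidableEq ι] (hA : ∀ t, A t ∈ Matrix.rowStochastic ℝ ι)
    (hz : ∀ t i, z (t + 1) i = ∑ j, A t i j • (z t j + e t j)) (he : ∀ t j, ‖e t j‖ ≤ ε t)
    (m : ℕ) (i : ι) :
    ‖z m i - ∑ j, transition A m i j • z 0 j‖ ≤ ∑ k ∈ range m, ε k := by
  induction m generalizing i with
  | zero => simp [transition, Matrix.one_apply]
  | succ m ih =>
    have hstep : z (m + 1) i - ∑ j, transition A (m + 1) i j • z 0 j =
        ∑ l, A m i l • (z m l - ∑ j, transition A m l j • z 0 j + e m l) := by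
      simp only [hz, transition, Matrix.mul_apply, sum_smul, mul_smul]
      rw [sum_comm]
      simp only [← smul_sum, ← sum_sub_distrib, ← smul_sub, add_sub_right_comm]
    have hnonneg (l : ι) : 0 ≤ A m i l := Matrix.nonneg_of_mem_rowStochastic (hA m)
    calc ‖z (m + 1) i - ∑ j, transition A (m + 1) i j • z 0 j‖
        ≤ ∑ l, A m i l * (∑ k ∈ range m, ε k + ε m) := by
          rw [hstep]
          refine norm_sum_le_of_le _ fun l _ => ?_
          rw [norm_smul, Real.norm_of_nonneg (hnonneg l)]
          exact mul_le_mul_of_nonneg_left (norm_add_le_of_le (ih l) (he m l)) (hnonneg l)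
      _ = ∑ k ∈ range (m + 1), ε k := by
          rw [← sum_mul, Matrix.sum_row_of_mem_rowStochastic (hA m), one_mul, sum_range_succ]

variable [Nonempty ι] {γ : ℝ} {L : ℕ}

lemma IsUniformlyMixing.diam_range_le (hA : IsUniformlyMixing A γ L)
    (hrow : ∀ t i, ∑ j, A t i j = 1)
    (hz : ∀ t i, z (t + 1) i = ∑ j, A t i j • (z t j + e t j)) (he : ∀ t j, ‖e t j‖ ≤ ε t) :
    Metric.diam (Set.range (z (Fintype.card ι * L))) ≤
      (1 - γ ^ (Fintype.card ι * L)) * Metric.diam (Set.range (z 0)) +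
        2 * ∑ k ∈ range (Fintype.card ι * L), ε k := by
  classical
  set B := Fintype.card ι * L
  have hstoch t : A t ∈ Matrix.rowStochastic ℝ ι :=
    Matrix.mem_rowStochastic_iff_sum.2 ⟨hA.nonneg t, hrow t⟩
  have hpair i i' : ‖z B i - z B i'‖ ≤ (1 - γ ^ B) * Metric.diam (Set.range (z 0)) +
      2 * ∑ k ∈ range B, ε k := by
    have hi := norm_sub_transition_smul_le hstoch hz he B i
    have hi' := norm_sub_transition_smul_le hstoch hz he B i'
    have hmid := norm_sum_smul_sub_sum_smul_le (transition_mem_rowStochastic hstoch B)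
      hA.pow_le_transition (norm_sub_le_diam_range (z 0)) i i'
    rw [← dist_eq_norm] at hi hi' hmid ⊢
    rw [dist_comm] at hi'
    linarith [dist_triangle4 (z B i) (∑ j, transition A B i j • z 0 j)
      (∑ j, transition A B i' j • z 0 j) (z B i')]
  have i₀ : ι := Classical.arbitrary ι
  refine Metric.diam_le_of_forall_dist_le ((norm_nonneg _).trans (hpair i₀ i₀)) ?_
  rintro _ ⟨i, rfl⟩ _ ⟨i', rfl⟩
  rw [dist_eq_norm]
  exact hpair i i'

theorem IsUniformlyMixing.summable_sq_diam_range (hA : IsUniformlyMixing A γ L)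
    (hrow : ∀ t i, ∑ j, A t i j = 1)
    (hz : ∀ t i, z (t + 1) i = ∑ j, A t i j • (z t j + e t j)) (he : ∀ t j, ‖e t j‖ ≤ ε t)
    (hε : Summable fun t => ε t ^ 2) :
    Summable fun t => Metric.diam (Set.range (z t)) ^ 2 := by
  classical
  have i₀ : ι := Classical.arbitrary ι
  have hγ : γ ^ (Fintype.card ι * L) ≤ 1 :=
    (hA.pow_le_transition i₀ i₀).trans <| Matrix.le_one_of_mem_rowStochastic <|
      transition_mem_rowStochastic
        (fun t => Matrix.mem_rowStochastic_iff_sum.2 ⟨hA.nonneg t, hrow t⟩) _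
  have hperturbation : Summable fun t => (2 * ∑ k ∈ range (Fintype.card ι * L), ε (t + k)) ^ 2 := by
    simpa only [mul_pow] using
      (summable_sq_sum_range_add hε (Fintype.card ι * L)).mul_left (2 ^ 2)
  refine summable_sq_of_le_mul_add (Fintype.card ι * L) (fun t => Metric.diam_nonneg)
    (sub_nonneg.2 hγ) (sub_lt_self 1 (pow_pos hA.pos _)) hperturbation fun t => ?_
  exact (hA.shift t).diam_range_le (z := fun s => z (t + s)) (e := fun s => e (t + s))
    (fun s => hrow (t + s)) (fun s => hz (t + s)) (fun s => he (t + s))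

end Consensus

section PushSum

variable {ι E : Type*} [Fintype ι] {W : ℕ → Matrix ι ι ℝ} {y : ℕ → ι → ℝ} {β : ℝ} {L : ℕ}

/-- The push-sum weights `y`: total mass `1` per agent is spread by column stochastic matrices. -/
structure IsPushSum (W : ℕ → Matrix ι ι ℝ) (y : ℕ → ι → ℝ) : Prop where
  sum_col : ∀ t j, ∑ i, W t i j = 1
  init : ∀ i, y 0 i = 1
  weight_step : ∀ t i, y (t + 1) i = ∑ j, W t i j * y t j

/-- The matrix that moves the ratios `z t i = x t i / y t i` when `W t` moves `x` and `y`. -/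
noncomputable def ratioMatrix (W : ℕ → Matrix ι ι ℝ) (y : ℕ → ι → ℝ) (t : ℕ) : Matrix ι ι ℝ :=
  .of fun i j => W t i j * y t j / y (t + 1) i

namespace IsPushSum

lemma sum_eq_card (h : IsPushSum W y) (t : ℕ) : ∑ i, y t i = Fintype.card ι := by
  induction t with
  | zero => simp [h.init]
  | succ t ih =>
    simp only [h.weight_step]
    rw [sum_comm]
    simp only [← sum_mul, h.sum_col, one_mul, ih]

lemma eq_sum_transition_mul [DecidableEq ι] (h : IsPushSum W y) (s m : ℕ) (i : ι) :
    y (s + m) i = ∑ j, transition (fun t => W (s + t)) m i j * y s j := by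
  induction m generalizing i with
  | zero => simp [transition, Matrix.one_apply]
  | succ m ih =>
    simp only [← add_assoc, h.weight_step, ih, transition, Matrix.mul_apply, mul_sum, sum_mul]
    rw [sum_comm]
    simp only [mul_assoc]

lemma pow_le_weight (h : IsPushSum W y) (hW : IsUniformlyMixing W β L) (t : ℕ) (i : ι) :
    β ^ t ≤ y t i := by
  have hpos := hW.pos
  induction t generalizing i with
  | zero => simp [h.init]
  | succ t ih =>
    have hy (j : ι) : 0 ≤ y t j := (pow_pos hpos t).le.trans (ih j)
    calc β ^ (t + 1) = β * β ^ t := pow_succ' β t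
      _ ≤ W t i i * y t i := by
        gcongr
        exacts [hW.nonneg t i i, hW.le_of_pos t i i (hW.diag_pos t i), ih i]
      _ ≤ ∑ j, W t i j * y t j :=
        single_le_sum (f := fun j => W t i j * y t j)
          (fun j _ => mul_nonneg (hW.nonneg t i j) (hy j)) (mem_univ i)
      _ = y (t + 1) i := (h.weight_step t i).symm

lemma weight_pos (h : IsPushSum W y) (hW : IsUniformlyMixing W β L) (t : ℕ) (i : ι) : 0 < y t i :=
  (pow_pos hW.pos t).trans_le (h.pow_le_weight hW t i)

lemma weight_le_card (h : IsPushSum W y) (hW : IsUniformlyMixing W β L) (t : ℕ) (i : ι) :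
    y t i ≤ Fintype.card ι := by
  rw [← h.sum_eq_card t]
  exact single_le_sum (fun j _ => (h.weight_pos hW t j).le) (mem_univ i)

-- After `card ι * L` steps each agent holds a fixed fraction of the total mass `card ι`.
theorem uniform_pow_le_weight (h : IsPushSum W y) (hW : IsUniformlyMixing W β L) (t : ℕ) (i : ι) :
    β ^ (Fintype.card ι * L) ≤ y t i := by
  classical
  set B := Fintype.card ι * L
  have hpos : 0 < β ^ B := pow_pos hW.pos B
  obtain htB | hBt := le_total t B
  · have hβ : β ≤ 1 :=
      calc β ≤ W 0 i i := hW.le_of_pos 0 i i (hW.diag_pos 0 i)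
        _ ≤ ∑ k, W 0 k i := single_le_sum (fun k _ => hW.nonneg 0 k i) (mem_univ i)
        _ = 1 := h.sum_col 0 i
    exact (pow_le_pow_of_le_one hW.pos.le hβ htB).trans (h.pow_le_weight hW t i)
  · obtain ⟨s, rfl⟩ := Nat.exists_eq_add_of_le' hBt
    have hcard : (1 : ℝ) ≤ Fintype.card ι := by exact_mod_cast Fintype.card_pos_iff.2 ⟨i⟩
    calc β ^ B ≤ β ^ B * ∑ j, y s j := by
          rw [h.sum_eq_card]
          exact le_mul_of_one_le_right hpos.le hcard
      _ = ∑ j, β ^ B * y s j := mul_sum _ _ _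
      _ ≤ ∑ j, transition (fun t => W (s + t)) B i j * y s j :=
          sum_le_sum fun j _ => mul_le_mul_of_nonneg_right ((hW.shift s).pow_le_transition i j)
            (h.weight_pos hW s j).le
      _ = y (s + B) i := (h.eq_sum_transition_mul s B i).symm

lemma sum_ratioMatrix (h : IsPushSum W y) (hW : IsUniformlyMixing W β L) (t : ℕ) (i : ι) :
    ∑ j, ratioMatrix W y t i j = 1 := by
  simp only [ratioMatrix, Matrix.of_apply]
  rw [← sum_div, ← h.weight_step, div_self (h.weight_pos hW (t + 1) i).ne']

theorem isUniformlyMixing_ratioMatrix [Nonempty ι] (h : IsPushSum W y)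
    (hW : IsUniformlyMixing W β L) :
    IsUniformlyMixing (ratioMatrix W y) (β * β ^ (Fintype.card ι * L) / Fintype.card ι) L := by
  have hβ := hW.pos
  have hy := h.weight_pos hW
  have hiff (t : ℕ) (i j : ι) : 0 < ratioMatrix W y t i j ↔ 0 < W t i j := by
    simp only [ratioMatrix, Matrix.of_apply, div_pos_iff_of_pos_right (hy (t + 1) i),
      mul_pos_iff_of_pos_right (hy t j)]
  exact {
    pos := by positivity
    nonneg := fun t i j =>
      div_nonneg (mul_nonneg (hW.nonneg t i j) (hy t j).le) (hy (t + 1) i).le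
    diag_pos := fun t i => (hiff t i i).2 (hW.diag_pos t i)
    le_of_pos := fun t i j hij => by
      have hWij := hW.le_of_pos t i j ((hiff t i j).1 hij)
      exact div_le_div₀ (mul_nonneg (hW.nonneg t i j) (hy t j).le)
        (mul_le_mul hWij (h.uniform_pow_le_weight hW t j) (by positivity) (hW.nonneg t i j))
        (hy (t + 1) i) (h.weight_le_card hW (t + 1) i)
    connected := by simpa only [hiff] using hW.connected }

end IsPushSum

variable [SeminormedAddCommGroup E] [NormedSpace ℝ E] {α : ℕ → ℝ} {x z g : ℕ → ι → E} {G : ℝ}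

/-- The push-subgradient recursion with mixing matrices `W`, stepsizes `α` and directions `g`; the
ratios `z` are the agents' estimates. That `g t i` is a subgradient at `z t i` is not included. -/
structure IsPushIteration (W : ℕ → Matrix ι ι ℝ) (y : ℕ → ι → ℝ) (α : ℕ → ℝ) (x z g : ℕ → ι → E) :
    Prop extends IsPushSum W y where
  step : ∀ t i, x (t + 1) i = ∑ j, W t i j • (x t j - α t • g t j)
  ratio : ∀ t i, z t i = (y t i)⁻¹ • x t i

namespace IsPushIteration

lemma smul_ratio (h : IsPushIteration W y α x z g) (hW : IsUniformlyMixing W β L) (t : ℕ) (i : ι) :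
    y t i • z t i = x t i := by
  rw [h.ratio, smul_inv_smul₀ (h.weight_pos hW t i).ne']

lemma ratio_step (h : IsPushIteration W y α x z g) (hW : IsUniformlyMixing W β L) (t : ℕ) (i : ι) :
    z (t + 1) i = ∑ j, ratioMatrix W y t i j • (z t j + (-(α t / y t j)) • g t j) := by
  rw [h.ratio, h.step, smul_sum]
  refine sum_congr rfl fun j _ => ?_
  have hyj : y t j ≠ 0 := (h.weight_pos hW t j).ne'
  rw [← h.smul_ratio hW t j, ratioMatrix, Matrix.of_apply]
  match_scalars <;> field_simp

theorem summable_sq_diam_range [Nonempty ι] (h : IsPushIteration W y α x z g)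
    (hW : IsUniformlyMixing W β L) (hG : ∀ t i, ‖g t i‖ ≤ G) (hα₀ : ∀ t, 0 ≤ α t)
    (hα : Summable fun t => α t ^ 2) : Summable fun t => Metric.diam (Set.range (z t)) ^ 2 := by
  set η := β ^ (Fintype.card ι * L)
  have hη : 0 < η := pow_pos hW.pos _
  have hperturbation (t : ℕ) (j : ι) : ‖(-(α t / y t j)) • g t j‖ ≤ G / η * α t := by
    have hy := h.weight_pos hW t j
    rw [norm_smul, norm_neg, Real.norm_of_nonneg (div_nonneg (hα₀ t) hy.le)]
    calc α t / y t j * ‖g t j‖ ≤ α t / η * G := by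
          gcongr
          exacts [div_nonneg (hα₀ t) hη.le, hα₀ t, h.uniform_pow_le_weight hW t j, hG t j]
      _ = G / η * α t := by ring
  refine (h.isUniformlyMixing_ratioMatrix hW).summable_sq_diam_range (h.sum_ratioMatrix hW)
    (h.ratio_step hW) hperturbation ?_
  simpa only [mul_pow] using hα.mul_left ((G / η) ^ 2)

lemma mean_step (h : IsPushIteration W y α x z g) (t : ℕ) :
    (Fintype.card ι : ℝ)⁻¹ • ∑ i, x (t + 1) i =
      (Fintype.card ι : ℝ)⁻¹ • ∑ i, x t i - (α t / Fintype.card ι) • ∑ i, g t i := by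
  simp only [h.step]
  rw [sum_comm]
  simp only [← sum_smul, h.sum_col, one_smul]
  rw [sum_sub_distrib, ← smul_sum, smul_sub, smul_smul, inv_mul_eq_div]

-- The mean of `x` is the average of the ratios `z` with weights `y / card ι`.
lemma norm_ratio_sub_mean_le (h : IsPushIteration W y α x z g) (hW : IsUniformlyMixing W β L)
    (t : ℕ) (j : ι) :
    ‖z t j - (Fintype.card ι : ℝ)⁻¹ • ∑ i, x t i‖ ≤ Metric.diam (Set.range (z t)) := by
  have hcard : 0 < (Fintype.card ι : ℝ) := by exact_mod_cast Fintype.card_pos_iff.2 ⟨j⟩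
  have hmean : (Fintype.card ι : ℝ)⁻¹ • ∑ i, x t i ∈ convexHull ℝ (Set.range (z t)) := by
    have := univ.centerMass_mem_convexHull (w := y t) (z := z t)
      (fun i _ => (h.weight_pos hW t i).le) (by rwa [h.sum_eq_card])
      (fun i _ => Set.mem_range_self i)
    simpa only [centerMass, h.sum_eq_card, h.smul_ratio hW] using this
  rw [← dist_eq_norm, ← convexHull_diam]
  exact Metric.dist_le_diam_of_mem (isBounded_convexHull.2 (Set.finite_range _).isBounded)
    (subset_convexHull ℝ _ (Set.mem_range_self j)) hmean

end IsPushIteration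

end PushSum

section Convex

variable {ι E : Type*}

lemma convexOn_finset_sum [AddCommMonoid E] [Module ℝ E] {s : Set E} (hs : Convex ℝ s)
    {f : ι → E → ℝ} (t : Finset ι) (hf : ∀ i ∈ t, ConvexOn ℝ s (f i)) :
    ConvexOn ℝ s fun w => ∑ i ∈ t, f i w := by
  classical
  induction t using Finset.induction_on with
  | empty => simpa using convexOn_const (0 : ℝ) hs
  | insert i t hi ih =>
    simp only [sum_insert hi]
    exact (hf i (mem_insert_self i t)).add (ih fun j hj => hf j (mem_insert_of_mem hj))

lemma exists_lipschitzOnWith_of_convexOn_univ [NormedAddCommGroup E] [NormedSpace ℝ E]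
    [FiniteDimensional ℝ E] {f : E → ℝ} (hf : ConvexOn ℝ Set.univ f) {s : Set E}
    (hs : Bornology.IsBounded s) : ∃ K, LipschitzOnWith K f s := by
  have : ProperSpace E := FiniteDimensional.proper ℝ E
  obtain ⟨K, hK⟩ := hf.locallyLipschitz.locallyLipschitzOn.exists_lipschitzOnWith_of_compact
    hs.isCompact_closure
  exact ⟨K, hK.mono subset_closure⟩

lemma exists_forall_lipschitzOnWith [Finite ι] {X Y : Type*} [PseudoEMetricSpace X]
    [PseudoEMetricSpace Y] {f : ι → X → Y} {s : Set X}
    (hf : ∀ i, ∃ K, LipschitzOnWith K (f i) s) : ∃ K, ∀ i, LipschitzOnWith K (f i) s := by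
  cases nonempty_fintype ι
  choose K hK using hf
  exact ⟨univ.sup K, fun i => (hK i).weaken (le_sup (mem_univ i))⟩

-- Everything is contracted towards `c` by a factor `l` small enough to enter `U`, where the `f i`
-- are Lipschitz; convexity makes both sides scale like `l`.
theorem sum_le_sum_add_mul_of_isMinOn [Fintype ι] [SeminormedAddCommGroup E] [NormedSpace ℝ E]
    {f : ι → E → ℝ} (hf : ∀ i, ConvexOn ℝ Set.univ (f i)) {c : E}
    (hmin : ∀ w, ∑ i, f i c ≤ ∑ i, f i w) {U : Set E} (hU : U ∈ nhds c) {K : NNReal}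
    (hK : ∀ i, LipschitzOnWith K (f i) U) (b : E) (z : ι → E) :
    ∑ i, f i c ≤ ∑ i, f i (z i) + K * ∑ i, ‖z i - b‖ := by
  have hnear (p : E) : ∀ᶠ l : ℝ in nhdsWithin 0 (Set.Ioi 0), AffineMap.lineMap c p l ∈ U := by
    have hcont : Continuous (AffineMap.lineMap (k := ℝ) c p) := AffineMap.lineMap_continuous
    exact nhdsWithin_le_nhds (hcont.continuousAt (by simpa using hU))
  obtain ⟨l, hbU, hzU, hl₀, hl₁⟩ := ((hnear b).and ((eventually_all.2 fun i => hnear (z i)).and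
    (Ioc_mem_nhdsGT one_pos))).exists
  have hcontract (i : ι) : f i (AffineMap.lineMap c b l) ≤
      (1 - l) * f i c + l * (f i (z i) + K * ‖z i - b‖) := by
    have hconvex : f i (AffineMap.lineMap c (z i) l) ≤ (1 - l) * f i c + l * f i (z i) := by
      rw [AffineMap.lineMap_apply_module]
      exact (hf i).2 trivial trivial (sub_nonneg.2 hl₁) hl₀.le (sub_add_cancel 1 l)
    have hdist : dist (AffineMap.lineMap c b l : E) (AffineMap.lineMap c (z i) l) =
        l * ‖z i - b‖ := by
      rw [dist_eq_norm, AffineMap.lineMap_apply_module', AffineMap.lineMap_apply_module',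
        add_sub_add_right_eq_sub, ← smul_sub, sub_sub_sub_cancel_right, norm_smul,
        Real.norm_of_nonneg hl₀.le, norm_sub_rev]
    have hlip := (le_abs_self _).trans ((hK i).dist_le_mul _ hbU _ (hzU i))
    rw [hdist] at hlip
    linarith
  have hsum : l * ∑ i, f i c ≤ l * (∑ i, f i (z i) + K * ∑ i, ‖z i - b‖) := by
    have := (hmin _).trans (sum_le_sum fun i (_ : i ∈ univ) => hcontract i)
    simp only [sum_add_distrib, ← mul_sum] at this
    linarith
  exact le_of_mul_le_mul_left hsum hl₀

theorem tendsto_map_weighted_average [AddCommGroup E] [Module ℝ E] {F : E → ℝ}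
    (hF : ConvexOn ℝ Set.univ F) {c : E} (hmin : ∀ w, F c ≤ F w) {α : ℕ → ℝ}
    (hα₀ : ∀ t, 0 ≤ α t) (hα : ¬ Summable α) {p : ℕ → E} {C : ℝ}
    (hC : ∀ T, ∑ t ∈ range T, α t * (F (p t) - F c) ≤ C) :
    Tendsto (fun T => F ((∑ t ∈ range T, α t)⁻¹ • ∑ t ∈ range T, α t • p t)) atTop
      (nhds (F c)) := by
  have hdiv : Tendsto (fun T => ∑ t ∈ range T, α t) atTop atTop :=
    (not_summable_iff_tendsto_nat_atTop_of_nonneg hα₀).1 hα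
  have hlim : Tendsto (fun T => F c + (∑ t ∈ range T, α t)⁻¹ * C) atTop (nhds (F c)) := by
    simpa using (hdiv.inv_tendsto_atTop.mul_const C).const_add (F c)
  refine tendsto_of_tendsto_of_tendsto_of_le_of_le' tendsto_const_nhds hlim
    (.of_forall fun T => hmin _) ?_
  filter_upwards [hdiv.eventually_gt_atTop 0] with T hT
  have hjensen := hF.map_centerMass_le (t := range T) (w := α) (p := p) (fun t _ => hα₀ t) hT
    (fun _ _ => trivial)
  have hgap := hC T
  simp only [mul_sub, sum_sub_distrib, ← sum_mul] at hgap
  calc F ((∑ t ∈ range T, α t)⁻¹ • ∑ t ∈ range T, α t • p t)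
      ≤ (∑ t ∈ range T, α t)⁻¹ * ∑ t ∈ range T, α t * F (p t) := hjensen
    _ ≤ (∑ t ∈ range T, α t)⁻¹ * ((∑ t ∈ range T, α t) * F c + C) := by
        gcongr
        linarith
    _ = F c + (∑ t ∈ range T, α t)⁻¹ * C := by
        rw [mul_add, inv_mul_cancel_left₀ hT.ne']

end Convex

section InexactSubgradient

lemma add_sum_range_le_add_tsum {u h e : ℕ → ℝ} (he₀ : ∀ t, 0 ≤ e t) (he : Summable e)
    (hu : ∀ t, u (t + 1) + h t ≤ u t + e t) (T : ℕ) :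
    u T + ∑ t ∈ range T, h t ≤ u 0 + ∑' t, e t := by
  have hpartial : u T + ∑ t ∈ range T, h t ≤ u 0 + ∑ t ∈ range T, e t := by
    induction T with
    | zero => simp
    | succ T ih =>
      simp only [sum_range_succ]
      linarith [hu T]
  linarith [he.sum_le_tsum (range T) fun t _ => he₀ t]

variable {ι E : Type*} [Fintype ι] [NormedAddCommGroup E] [InnerProductSpace ℝ E]
  {f : ι → E → ℝ} {a Δ : ℕ → ℝ} {G : ℝ} {b : ℕ → E} {z g : ℕ → ι → E} {c : E}

/-- A subgradient method for `∑ i, f i` with stepsizes `a`, run on `b`, in which the subgradient of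
`f i` is taken at a point `z t i` within `Δ t` of `b t`, and has norm at most `G`. -/
structure IsInexactSubgradient (f : ι → E → ℝ) (a Δ : ℕ → ℝ) (G : ℝ) (b : ℕ → E)
    (z g : ℕ → ι → E) : Prop where
  step : ∀ t, b (t + 1) = b t - a t • ∑ i, g t i
  subgradient : ∀ t i w, f i (z t i) + ⟪g t i, w - z t i⟫_ℝ ≤ f i w
  norm_le : ∀ t i, ‖g t i‖ ≤ G
  norm_sub_le : ∀ t i, ‖z t i - b t‖ ≤ Δ t

namespace IsInexactSubgradient

lemma sum_sub_sum_le_inner (h : IsInexactSubgradient f a Δ G b z g) (w : E) (t : ℕ) :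
    ∑ i, f i (z t i) - ∑ i, f i w - Fintype.card ι * (G * Δ t) ≤ ⟪∑ i, g t i, b t - w⟫_ℝ := by
  have hterm (i : ι) : f i (z t i) - f i w - G * Δ t ≤ ⟪g t i, b t - w⟫_ℝ := by
    have hdrift : ⟪g t i, z t i - b t⟫_ℝ ≤ G * Δ t :=
      (real_inner_le_norm _ _).trans <| mul_le_mul (h.norm_le t i) (h.norm_sub_le t i)
        (norm_nonneg _) ((norm_nonneg _).trans (h.norm_le t i))
    have hsplit : ⟪g t i, b t - w⟫_ℝ = -⟪g t i, w - z t i⟫_ℝ - ⟪g t i, z t i - b t⟫_ℝ := by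
      simp only [inner_sub_right]
      ring
    linarith [h.subgradient t i w]
  rw [sum_inner]
  simpa [sum_sub_distrib] using sum_le_sum fun i (_ : i ∈ univ) => hterm i

lemma norm_sq_succ_le (h : IsInexactSubgradient f a Δ G b z g) (ha : ∀ t, 0 ≤ a t) (w : E)
    (t : ℕ) :
    ‖b (t + 1) - w‖ ^ 2 + 2 * (a t * (∑ i, f i (z t i) - ∑ i, f i w)) ≤
      ‖b t - w‖ ^ 2 +
        (2 * Fintype.card ι * G * (a t * Δ t) + (Fintype.card ι * G) ^ 2 * a t ^ 2) := by
  have hinner := mul_le_mul_of_nonneg_left (h.sum_sub_sum_le_inner w t) (ha t)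
  have hnorm : ‖∑ i, g t i‖ ≤ Fintype.card ι * G :=
    (norm_sum_le_of_le univ fun i _ => h.norm_le t i).trans_eq (by simp)
  have hsq := mul_le_mul_of_nonneg_left (pow_le_pow_left₀ (norm_nonneg _) hnorm 2)
    (sq_nonneg (a t))
  have hexpand : ‖b (t + 1) - w‖ ^ 2 =
      ‖b t - w‖ ^ 2 - 2 * (a t * ⟪∑ i, g t i, b t - w⟫_ℝ) + a t ^ 2 * ‖∑ i, g t i‖ ^ 2 := by
    rw [h.step, sub_right_comm, norm_sub_sq_real, real_inner_smul_right, real_inner_comm,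
      norm_smul, mul_pow, Real.norm_eq_abs, sq_abs]
  linarith

lemma exists_add_sum_le [Nonempty ι] (h : IsInexactSubgradient f a Δ G b z g) (ha : ∀ t, 0 ≤ a t)
    (ha₂ : Summable fun t => a t ^ 2) (haΔ : Summable fun t => a t * Δ t) {φ : ℕ → ℝ} {M : ℝ}
    (hM : 0 ≤ M) (hφ : ∀ t, φ t ≤ ∑ i, f i (z t i) - ∑ i, f i c + M * Δ t) :
    ∃ C, ∀ T, ‖b T - c‖ ^ 2 + 2 * ∑ t ∈ range T, a t * φ t ≤ C := by
  let N : ℝ := Fintype.card ι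
  let i₀ : ι := Classical.arbitrary ι
  have hG : 0 ≤ G := (norm_nonneg _).trans (h.norm_le 0 i₀)
  have hΔ (t : ℕ) : 0 ≤ Δ t := (norm_nonneg _).trans (h.norm_sub_le t i₀)
  let e (t : ℕ) : ℝ := (2 * N * G + 2 * M) * (a t * Δ t) + (N * G) ^ 2 * a t ^ 2
  have he₀ (t : ℕ) : 0 ≤ e t := by
    have := mul_nonneg (ha t) (hΔ t)
    positivity
  have he : Summable e := (haΔ.mul_left _).add (ha₂.mul_left _)
  refine ⟨‖b 0 - c‖ ^ 2 + ∑' t, e t, fun T => ?_⟩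
  rw [mul_sum]
  refine add_sum_range_le_add_tsum (u := fun t => ‖b t - c‖ ^ 2) he₀ he (fun t => ?_) T
  have hφt := mul_le_mul_of_nonneg_left (hφ t) (ha t)
  have henergy := h.norm_sq_succ_le ha c t
  simp only [e, N]
  linarith

theorem exists_norm_sub_le [Nonempty ι] (h : IsInexactSubgradient f a Δ G b z g)
    (ha : ∀ t, 0 ≤ a t) (ha₂ : Summable fun t => a t ^ 2) (haΔ : Summable fun t => a t * Δ t)
    (hf : ∀ i, ConvexOn ℝ Set.univ (f i)) (hmin : ∀ w, ∑ i, f i c ≤ ∑ i, f i w) {U : Set E}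
    (hU : U ∈ nhds c) {K : NNReal} (hK : ∀ i, LipschitzOnWith K (f i) U) :
    ∃ R, ∀ t, ‖b t - c‖ ≤ R := by
  have hlower (t : ℕ) :
      0 ≤ ∑ i, f i (z t i) - ∑ i, f i c + K * Fintype.card ι * Δ t := by
    have hdrift : ∑ i, ‖z t i - b t‖ ≤ Fintype.card ι * Δ t :=
      (sum_le_card_nsmul _ _ _ fun i _ => h.norm_sub_le t i).trans_eq (by simp)
    have := mul_le_mul_of_nonneg_left hdrift K.coe_nonneg
    linarith [sum_le_sum_add_mul_of_isMinOn hf hmin hU hK (b t) (z t)]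
  obtain ⟨C, hC⟩ := h.exists_add_sum_le ha ha₂ haΔ (φ := 0) (by positivity) hlower
  exact ⟨√C, fun t => Real.le_sqrt_of_sq_le (by simpa using hC t)⟩

theorem exists_sum_mul_gap_le [Nonempty ι] (h : IsInexactSubgradient f a Δ G b z g)
    (ha : ∀ t, 0 ≤ a t) (ha₂ : Summable fun t => a t ^ 2) (haΔ : Summable fun t => a t * Δ t)
    {s : Set E} (hs : ∀ t i, z t i ∈ s) {K : NNReal} (hK : ∀ i, LipschitzOnWith K (f i) s)
    (k : ι) :
    ∃ C, ∀ T, ∑ t ∈ range T, a t * (∑ i, f i (z t k) - ∑ i, f i c) ≤ C := by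
  have hupper (t : ℕ) : ∑ i, f i (z t k) - ∑ i, f i c ≤
      ∑ i, f i (z t i) - ∑ i, f i c + Fintype.card ι * (K * 2) * Δ t := by
    have hterm (i : ι) : f i (z t k) ≤ f i (z t i) + K * (2 * Δ t) := by
      have hdist : dist (z t k) (z t i) ≤ 2 * Δ t := by
        have hk := h.norm_sub_le t k
        have hi := h.norm_sub_le t i
        rw [← dist_eq_norm] at hk hi
        linarith [dist_triangle_right (z t k) (z t i) (b t)]
      have hlip := (le_abs_self _).trans ((hK i).dist_le_mul _ (hs t k) _ (hs t i))
      linarith [mul_le_mul_of_nonneg_left hdist K.coe_nonneg]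
    have := sum_le_sum fun i (_ : i ∈ univ) => hterm i
    simp only [sum_add_distrib, sum_const, card_univ, nsmul_eq_mul] at this
    linarith
  obtain ⟨C, hC⟩ := h.exists_add_sum_le ha ha₂ haΔ (by positivity) hupper
  exact ⟨C / 2, fun T => by linarith [hC T, sq_nonneg ‖b T - c‖]⟩

end IsInexactSubgradient

end InexactSubgradient

section PushSubgradient

variable {ι E : Type*} [Fintype ι] [NormedAddCommGroup E] [InnerProductSpace ℝ E]
  {W : ℕ → Matrix ι ι ℝ} {y : ℕ → ι → ℝ} {β G : ℝ} {L : ℕ} {α : ℕ → ℝ} {x z g : ℕ → ι → E}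
  {f : ι → E → ℝ} {c : E}

namespace IsPushIteration

lemma isInexactSubgradient (h : IsPushIteration W y α x z g) (hW : IsUniformlyMixing W β L)
    (hG : ∀ t i, ‖g t i‖ ≤ G) (hsub : ∀ t i w, f i (z t i) + ⟪g t i, w - z t i⟫_ℝ ≤ f i w) :
    IsInexactSubgradient f (fun t => α t / Fintype.card ι)
      (fun t => Metric.diam (Set.range (z t))) G
      (fun t => (Fintype.card ι : ℝ)⁻¹ • ∑ i, x t i) z g where
  step := h.mean_step
  subgradient := hsub
  norm_le := hG
  norm_sub_le := h.norm_ratio_sub_mean_le hW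

theorem exists_sum_mul_gap_le (h : IsPushIteration W y α x z g) (hW : IsUniformlyMixing W β L)
    (hG : ∀ t i, ‖g t i‖ ≤ G) (hsub : ∀ t i w, f i (z t i) + ⟪g t i, w - z t i⟫_ℝ ≤ f i w)
    (hα₀ : ∀ t, 0 ≤ α t) (hα₂ : Summable fun t => α t ^ 2)
    (hf : ∀ i, ConvexOn ℝ Set.univ (f i))
    (hlip : ∀ i s, Bornology.IsBounded s → ∃ K, LipschitzOnWith K (f i) s)
    (hmin : ∀ w, ∑ i, f i c ≤ ∑ i, f i w) (k : ι) :
    ∃ C, ∀ T,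
      ∑ t ∈ range T, α t / Fintype.card ι * (∑ i, f i (z t k) - ∑ i, f i c) ≤ C := by
  have : Nonempty ι := ⟨k⟩
  have hmethod := h.isInexactSubgradient hW hG hsub
  have hdiam := h.summable_sq_diam_range hW hG hα₀ hα₂
  have ha (t : ℕ) : 0 ≤ α t / Fintype.card ι := div_nonneg (hα₀ t) (Nat.cast_nonneg _)
  have ha₂ : Summable fun t => (α t / Fintype.card ι) ^ 2 := by
    simpa only [div_pow] using hα₂.div_const _
  have haΔ : Summable fun t => α t / Fintype.card ι * Metric.diam (Set.range (z t)) :=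
    Real.summable_mul_of_Lp_Lq_of_nonneg .two_two ha (fun _ => Metric.diam_nonneg)
      (by simpa only [Real.rpow_two] using ha₂) (by simpa only [Real.rpow_two] using hdiam)
  have hball (r : ℝ) : ∃ K, ∀ i, LipschitzOnWith K (f i) (Metric.closedBall c r) :=
    exists_forall_lipschitzOnWith fun i => hlip i _ Metric.isBounded_closedBall
  obtain ⟨K₁, hK₁⟩ := hball 1
  obtain ⟨R, hR⟩ := hmethod.exists_norm_sub_le ha ha₂ haΔ hf hmin
    (Metric.closedBall_mem_nhds c one_pos) hK₁
  obtain ⟨D, hD⟩ : ∃ D, ∀ t, Metric.diam (Set.range (z t)) ≤ D :=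
    ⟨√(∑' t, Metric.diam (Set.range (z t)) ^ 2), fun t =>
      Real.le_sqrt_of_sq_le (hdiam.le_tsum t fun _ _ => sq_nonneg _)⟩
  have hz (t : ℕ) (i : ι) : z t i ∈ Metric.closedBall c (D + R) := by
    rw [mem_closedBall_iff_norm, ← sub_add_sub_cancel]
    exact norm_add_le_of_le ((hmethod.norm_sub_le t i).trans (hD t)) (hR t)
  obtain ⟨K, hK⟩ := hball (D + R)
  exact hmethod.exists_sum_mul_gap_le ha ha₂ haΔ hz hK k

end IsPushIteration

theorem stmt_6_general (hW : IsUniformlyMixing W β L) (h : IsPushIteration W y α x z g)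
    (hG : ∀ t i, ‖g t i‖ ≤ G) (hsub : ∀ t i w, f i (z t i) + ⟪g t i, w - z t i⟫_ℝ ≤ f i w)
    (hα₀ : ∀ t, 0 ≤ α t) (hα : ¬ Summable α) (hα₂ : Summable fun t => α t ^ 2)
    (hf : ∀ i, ConvexOn ℝ Set.univ (f i))
    (hlip : ∀ i s, Bornology.IsBounded s → ∃ K, LipschitzOnWith K (f i) s)
    {F : E → ℝ} (hF : ∀ w, F w = (Fintype.card ι : ℝ)⁻¹ * ∑ i, f i w) (hmin : ∀ w, F c ≤ F w)
    (k : ι) :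
    Tendsto (fun T => F ((∑ t ∈ range T, α t)⁻¹ • ∑ t ∈ range T, α t • z t k)) atTop
      (nhds (F c)) := by
  have hcard : 0 < (Fintype.card ι : ℝ)⁻¹ :=
    inv_pos.2 (by exact_mod_cast Fintype.card_pos_iff.2 ⟨k⟩)
  have hFconv : ConvexOn ℝ Set.univ F := by
    rw [funext hF]
    exact (convexOn_finset_sum convex_univ univ fun i _ => hf i).smul hcard.le
  have hsum_min (w : E) : ∑ i, f i c ≤ ∑ i, f i w :=
    le_of_mul_le_mul_left (by simpa only [hF] using hmin w) hcard
  obtain ⟨C, hC⟩ := h.exists_sum_mul_gap_le hW hG hsub hα₀ hα₂ hf hlip hsum_min k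
  refine tendsto_map_weighted_average hFconv hmin hα₀ hα (C := C) fun T => ?_
  simpa only [hF, ← mul_sub, ← mul_assoc, ← div_eq_mul_inv] using hC T

end PushSubgradient

theorem stmt_6
    (n : ℕ) (hn : 0 < n)
    (W : ℕ → Matrix (Fin n) (Fin n) ℝ)
    (hWnonneg : ∀ t i j, 0 ≤ W t i j)
    (hWcol : ∀ t j, ∑ i, W t i j = 1)
    (hWdiag : ∀ t i, 0 < W t i i)
    (β : ℝ) (hβ : 0 < β)
    (hWβ : ∀ t i j, 0 < W t i j → β ≤ W t i j)
    (L : ℕ) (hL : 0 < L)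
    (hUSC : ∀ t : ℕ, ∀ i j : Fin n,
      Relation.TransGen (fun u v : Fin n => ∃ k ∈ Finset.Ico t (t + L), 0 < W k v u) i j)
    (d : ℕ)
    (x g : ℕ → Fin n → EuclideanSpace ℝ (Fin d))
    (y : ℕ → Fin n → ℝ)
    (hy0 : ∀ i, y 0 i = 1)
    (hyrec : ∀ t i, y (t + 1) i = ∑ j, W t i j * y t j)
    (α : ℕ → ℝ) (hαpos : ∀ t, 0 < α t)
    (hxrec : ∀ t i, x (t + 1) i = ∑ j, W t i j • (x t j - α t • g t j))
    (z : ℕ → Fin n → EuclideanSpace ℝ (Fin d))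
    (hz : ∀ t i, z t i = (y t i)⁻¹ • x t i)
    (G : ℝ) (hG : ∀ t i, ‖g t i‖ ≤ G)
    (f : Fin n → EuclideanSpace ℝ (Fin d) → ℝ)
    (hconv : ∀ i, ConvexOn ℝ Set.univ (f i))
    (F : EuclideanSpace ℝ (Fin d) → ℝ)
    (hF : ∀ w, F w = (n : ℝ)⁻¹ * ∑ i, f i w)
    (zstar : EuclideanSpace ℝ (Fin d))
    (hmin : ∀ w, F zstar ≤ F w)
    (hsub : ∀ t j w, f j (z t j) + ⟪g t j, w - z t j⟫_ℝ ≤ f j w)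
    (hαmono : ∀ t, α (t + 1) ≤ α t)
    (hαdiv : ¬ Summable α)
    (hαsq : Summable fun t => α t ^ 2)
    :
    ∀ k : Fin n,
      Tendsto (fun t =>
          F ((∑ τ ∈ Finset.range (t + 1), α τ)⁻¹ •
              ∑ τ ∈ Finset.range (t + 1), α τ • z τ k))
        atTop (nhds (F zstar)) := by
  exact fun k => (stmt_6_general
    { pos := hβ, nonneg := hWnonneg, diag_pos := hWdiag, le_of_pos := hWβ, connected := hUSC }
    { sum_col := hWcol, init := hy0, weight_step := hyrec, step := hxrec, ratio := hz }
    hG hsub (fun t => (hαpos t).le) hαdiv hαsq hconv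
    (fun i _ hs => exists_lipschitzOnWith_of_convexOn_univ (hconv i) hs)
    (by simpa only [Fintype.card_fin] using hF) hmin k).comp (tendsto_add_atTop_nat 1)
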